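/- arXiv:1904.09372 — 2 statements merged into one kernel-verified Lean document; each statement's English description precedes it below -/
import Mathlib

section
/- Exact bootstrap bias of the plug-in average density estimator: almost surely, E*_n[θ̂_n^{AD,*}] − θ̂_n^{AD} = K(0)/(n h_n^d) − θ̂_n^{AD}/n; equivalently, E*_n[θ̂_n^{AD,*}] = K(0)/(n h_n^d) + (1 − 1/n) θ̂_n^{AD}. -/
/-!
The bootstrap identity is a finite counting identity, valid for every data path. In the double sum
`n⁻² ∑ᵢⱼ Kₙ(X*ᵢ - X*ⱼ)` each of the `n` diagonal terms equals `Kₙ(0) = h⁻ᵈ K(0)`, whereas for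
`i ≠ j` the pair `(X*ᵢ, X*ⱼ)` is uniform on pairs of data points (coinciding ones included), so
each of the `n² - n` off-diagonal terms has bootstrap expectation `θ̂ₙ`
(`card_sq_mul_sum_eval_pair`). Hence `E*ₙ[θ̂*ₙ] = n⁻² (n h⁻ᵈ K(0) + (n² - n) θ̂ₙ)`.
-/

open MeasureTheory ProbabilityTheory Filter
open scoped BigOperators ENNReal NNReal Topology ProbabilityTheory

noncomputable section

/-- Scaled kernel `K_n(x) = h^{-d} K(x/h)`. -/
def Kn (d : ℕ) (K : (Fin d → ℝ) → ℝ) (h : ℝ) (x : Fin d → ℝ) : ℝ :=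
  (h ^ d)⁻¹ * K (h⁻¹ • x)

/-- Kernel density estimator based on the data points `X 0, …, X (n-1)`. -/
def fhat (d : ℕ) (K : (Fin d → ℝ) → ℝ) (h : ℝ) (n : ℕ) (X : ℕ → Fin d → ℝ)
    (x : Fin d → ℝ) : ℝ :=
  (n : ℝ)⁻¹ * ∑ j ∈ Finset.range n, Kn d K h (x - X j)

/-- Plug-in average density estimator `θ̂ₙ^AD`. -/
def thetaAD (d : ℕ) (K : (Fin d → ℝ) → ℝ) (h : ℝ) (n : ℕ) (X : ℕ → Fin d → ℝ) : ℝ :=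
  (n : ℝ)⁻¹ * ∑ i ∈ Finset.range n, fhat d K h n X (X i)

/-- Bias-corrected average density estimator `θ̂ₙ^{AD-BC}`. -/
def thetaADBC (d : ℕ) (K : (Fin d → ℝ) → ℝ) (h : ℝ) (n : ℕ) (X : ℕ → Fin d → ℝ) : ℝ :=
  thetaAD d K h n X - K 0 / ((n : ℝ) * h ^ d)

/-- Generalized jackknife average density estimator `θ̂ₙ^{AD-GJ}` (with constant `c`). -/
def thetaADGJ (d : ℕ) (K : (Fin d → ℝ) → ℝ) (c h : ℝ) (n : ℕ) (X : ℕ → Fin d → ℝ) : ℝ :=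
  (1 - c ^ d)⁻¹ * thetaAD d K h n X - c ^ d * (1 - c ^ d)⁻¹ * thetaAD d K (c * h) n X

/-- Block of (1-based) observation `i+1` among `B` blocks: `⌈(i+1) B / n⌉`. -/
def blk (n B i : ℕ) : ℕ := ((i + 1) * B + n - 1) / n

/-- Leave-out weights `w_{ij,n}`. -/
def wLO (n B i j : ℕ) : ℝ :=
  (if blk n B i ≠ blk n B j then (1 : ℝ) else 0) /
    ∑ k ∈ Finset.range n, if blk n B i ≠ blk n B k then (1 : ℝ) else 0

/-- Leave-out kernel density estimator `f̂_{i,n}^LO`. -/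
def fLO (d : ℕ) (K : (Fin d → ℝ) → ℝ) (h : ℝ) (n B : ℕ) (X : ℕ → Fin d → ℝ)
    (i : ℕ) (x : Fin d → ℝ) : ℝ :=
  ∑ j ∈ Finset.range n, wLO n B i j * Kn d K h (x - X j)

/-- Leave-out average density estimator `θ̂ₙ^{AD-LO}`. -/
def thetaADLO (d : ℕ) (K : (Fin d → ℝ) → ℝ) (h : ℝ) (n B : ℕ) (X : ℕ → Fin d → ℝ) : ℝ :=
  (n : ℝ)⁻¹ * ∑ i ∈ Finset.range n, fLO d K h n B X i (X i)

/-- Plug-in integrated squared density estimator `θ̂ₙ^ISD`. -/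
def thetaISD (d : ℕ) (K : (Fin d → ℝ) → ℝ) (h : ℝ) (n : ℕ) (X : ℕ → Fin d → ℝ) : ℝ :=
  ∫ x, (fhat d K h n X x) ^ 2

/-- Bias-corrected integrated squared density estimator `θ̂ₙ^{ISD-BC}`. -/
def thetaISDBC (d : ℕ) (K : (Fin d → ℝ) → ℝ) (h : ℝ) (n : ℕ) (X : ℕ → Fin d → ℝ) : ℝ :=
  thetaISD d K h n X - (∫ u, (K u) ^ 2) / ((n : ℝ) * h ^ d)

/-- Generalized jackknife integrated squared density estimator `θ̂ₙ^{ISD-GJ}`. -/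
def thetaISDGJ (d : ℕ) (K : (Fin d → ℝ) → ℝ) (c h : ℝ) (n : ℕ) (X : ℕ → Fin d → ℝ) : ℝ :=
  (1 - c ^ d)⁻¹ * thetaISD d K h n X - c ^ d * (1 - c ^ d)⁻¹ * thetaISD d K (c * h) n X

/-- Leave-out integrated squared density estimator `θ̂ₙ^{ISD-LO}`. -/
def thetaISDLO (d : ℕ) (K : (Fin d → ℝ) → ℝ) (h : ℝ) (n B : ℕ) (X : ℕ → Fin d → ℝ) : ℝ :=
  (n : ℝ)⁻¹ * ∑ i ∈ Finset.range n, ∫ x, (fLO d K h n B X i x) ^ 2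

/-- Half-sample (cross-fit, `Bₙ = 2`) kernel density estimator `f̂_{i,n}^CF`
(0-based index `i`). -/
def fCF (d : ℕ) (K : (Fin d → ℝ) → ℝ) (h : ℝ) (n : ℕ) (X : ℕ → Fin d → ℝ)
    (i : ℕ) (x : Fin d → ℝ) : ℝ :=
  if i < n / 2 then
    ((n - n / 2 : ℕ) : ℝ)⁻¹ * ∑ j ∈ Finset.Ico (n / 2) n, Kn d K h (x - X j)
  else ((n / 2 : ℕ) : ℝ)⁻¹ * ∑ j ∈ Finset.range (n / 2), Kn d K h (x - X j)

/-- Doubly cross-fit integrated squared density estimator `θ̂ₙ^{ISD-DCF}`. -/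
def thetaISDDCF (d : ℕ) (K : (Fin d → ℝ) → ℝ) (h : ℝ) (n : ℕ) (X : ℕ → Fin d → ℝ) : ℝ :=
  ∫ x, fCF d K h n X 0 x * fCF d K h n X (n - 1) x

/-- The estimand: the average density `θ₀ = ∫ f₀(x)² dx`. -/
def theta0 (d : ℕ) (f0 : (Fin d → ℝ) → ℝ) : ℝ := ∫ x, f0 x ^ 2

/-- The efficient influence function `L₀(x) = 2 (f₀(x) − θ₀)`. -/
def effInf (d : ℕ) (f0 : (Fin d → ℝ) → ℝ) (x : Fin d → ℝ) : ℝ :=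
  2 * (f0 x - theta0 d f0)

/-- `f` is of Hölder class `C^{s2}(ℝ^d)`: `⌊s2⌋`-times continuously differentiable with
bounded derivatives, and the derivatives of order `⌊s2⌋` are Hölder continuous with
exponent `s2 - ⌊s2⌋`. -/
def HolderClass (d : ℕ) (s2 : ℝ) (f : (Fin d → ℝ) → ℝ) : Prop :=
  ContDiff ℝ (⌊s2⌋₊ : ℕ) f ∧
  (∀ i ≤ ⌊s2⌋₊, ∃ C : ℝ, ∀ x, ‖iteratedFDeriv ℝ i f x‖ ≤ C) ∧
  ∃ C : ℝ≥0, HolderWith C (s2 - (⌊s2⌋₊ : ℝ)).toNNReal (iteratedFDeriv ℝ ⌊s2⌋₊ f)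

/-- Condition K: `K` is an even, bounded kernel of order `P` with an `ℓ¹`-moment of
order `P`. -/
def CondK (d : ℕ) (P : ℝ) (K : (Fin d → ℝ) → ℝ) : Prop :=
  (∀ x, K (-x) = K x) ∧ (∃ C : ℝ, ∀ x, |K x| ≤ C) ∧
  Integrable (fun u : Fin d → ℝ => |K u| * (1 + (∑ i, |u i|) ^ P)) ∧
  (∫ u : Fin d → ℝ, K u) = 1 ∧
  ∀ l : Fin d → ℕ, 0 < ∑ i, l i → ((∑ i, l i : ℕ) : ℝ) < P →
    (∫ u : Fin d → ℝ, (∏ i, u i ^ l i) * K u) = 0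

/-- Semiparametric efficiency of an estimator sequence `est`:
`√n (est_n − θ₀) − n^{-1/2} ∑_{i<n} L₀(Xᵢ) → 0` in probability. -/
def Efficient {Ω : Type} [MeasureSpace Ω] (d : ℕ) (f0 : (Fin d → ℝ) → ℝ)
    (X : ℕ → Ω → Fin d → ℝ) (est : ℕ → Ω → ℝ) : Prop :=
  TendstoInMeasure ℙ
    (fun (n : ℕ) ω => Real.sqrt n * (est n ω - theta0 d f0) -
      (Real.sqrt n)⁻¹ * ∑ i ∈ Finset.range n, effInf d f0 (X i ω))
    atTop (fun _ => (0 : ℝ))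

/-- Bootstrap resampling: replace `X 0, …, X (n-1)` by `X (σ 0), …, X (σ (n-1))`. -/
def resample {V : Type*} (n : ℕ) (σ : Fin n → Fin n) (X : ℕ → V) : ℕ → V :=
  fun i => if hi : i < n then X (σ ⟨i, hi⟩) else X i

/-- Bootstrap expectation `E*ₙ[g]`: the average of `g` over all `nⁿ` equally likely
resamples of the data `X 0, …, X (n-1)`. -/
def bootE {V : Type*} (n : ℕ) (g : (ℕ → V) → ℝ) (X : ℕ → V) : ℝ :=
  ((n : ℝ) ^ n)⁻¹ * ∑ σ : Fin n → Fin n, g (resample n σ X)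

open Classical in
/-- Bootstrap distribution function `t ↦ P*ₙ[√n (θ̂*ₙ − θ̂ₙ) ≤ t]`. -/
def bootCDF {V : Type*} (n : ℕ) (est : (ℕ → V) → ℝ) (X : ℕ → V) (t : ℝ) : ℝ :=
  ((n : ℝ) ^ n)⁻¹ * ∑ σ : Fin n → Fin n,
    if Real.sqrt n * (est (resample n σ X) - est X) ≤ t then (1 : ℝ) else 0

/-- Bootstrap consistency of an estimator sequence `est` (viewed as a function of the
data path): `sup_t |P[√n (θ̂ₙ − θ₀) ≤ t] − P*ₙ[√n (θ̂*ₙ − θ̂ₙ) ≤ t]| → 0` in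
probability. -/
def BootConsistent {Ω : Type} [MeasureSpace Ω] (d : ℕ) (f0 : (Fin d → ℝ) → ℝ)
    (X : ℕ → Ω → Fin d → ℝ) (est : ℕ → (ℕ → Fin d → ℝ) → ℝ) : Prop :=
  TendstoInMeasure ℙ
    (fun (n : ℕ) ω => ⨆ t : ℝ,
      |(ℙ {ω' | Real.sqrt n * (est n (fun i => X i ω') - theta0 d f0) ≤ t}).toReal -
        bootCDF n (est n) (fun i => X i ω) t|)
    atTop (fun _ => (0 : ℝ))


/-- The autocorrelation function `f₀^Δ(x) = ∫ f₀(u) f₀(x + u) du`. -/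
def f0Delta (d : ℕ) (f0 : (Fin d → ℝ) → ℝ) (x : Fin d → ℝ) : ℝ :=
  ∫ u, f0 u * f0 (x + u)

/-- The smoothed density `f_n^AD(x) = E[K_n(x − X)] = ∫ K(u) f₀(x + u h) du`. -/
def fnAD (d : ℕ) (K : (Fin d → ℝ) → ℝ) (h : ℝ) (f0 : (Fin d → ℝ) → ℝ)
    (x : Fin d → ℝ) : ℝ :=
  ∫ u, K u * f0 (x + h • u)

/-- The smoothed parameter `θ_n^AD = E[f_n^AD(X)]`. -/
def thetanAD (d : ℕ) (K : (Fin d → ℝ) → ℝ) (h : ℝ) (f0 : (Fin d → ℝ) → ℝ) : ℝ :=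
  ∫ x, fnAD d K h f0 x * f0 x

/-- The degenerate (Hoeffding projection) kernel `W_n^AD`. -/
def WnAD (d : ℕ) (K : (Fin d → ℝ) → ℝ) (h : ℝ) (f0 : (Fin d → ℝ) → ℝ)
    (x1 x2 : Fin d → ℝ) : ℝ :=
  Kn d K h (x1 - x2) - fnAD d K h f0 x1 - fnAD d K h f0 x2 + thetanAD d K h f0

/-- A coordinate of a uniformly random function `ι → κ` is uniform on `κ`. -/
lemma card_mul_sum_eval {ι κ : Type*} [Fintype ι] [DecidableEq ι] [Fintype κ]
    (i : ι) (f : κ → ℝ) :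
    (Fintype.card κ : ℝ) * ∑ σ : ι → κ, f (σ i) =
      (Fintype.card κ : ℝ) ^ Fintype.card ι * ∑ a, f a := by
  have hsplit : ∑ σ : ι → κ, f (σ i) = ∑ p : κ × ({j // j ≠ i} → κ), f p.1 :=
    Fintype.sum_equiv (Equiv.funSplitAt i κ) _ _ (fun σ => by simp [Equiv.funSplitAt])
  have hcard : Fintype.card ι = Fintype.card {j // j ≠ i} + 1 := by
    have hpos : 0 < Fintype.card ι := Fintype.card_pos_iff.mpr ⟨i⟩
    have := Set.card_ne_eq i
    simp only [Set.coe_ofPred] at this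
    omega
  rw [hsplit, Fintype.sum_prod_type, hcard, pow_succ]
  simp only [Finset.sum_const, Finset.card_univ, nsmul_eq_mul, Fintype.card_fun, Nat.cast_pow]
  rw [← Finset.mul_sum]
  ring

/-- Two distinct coordinates of a uniformly random function `ι → κ` are jointly uniform on
`κ × κ`. -/
lemma card_sq_mul_sum_eval_pair {ι κ : Type*} [Fintype ι] [DecidableEq ι] [Fintype κ]
    {i j : ι} (hij : j ≠ i) (G : κ → κ → ℝ) :
    (Fintype.card κ : ℝ) ^ 2 * ∑ σ : ι → κ, G (σ i) (σ j) =
      (Fintype.card κ : ℝ) ^ Fintype.card ι * ∑ a, ∑ b, G a b := by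
  have hsplit : ∑ σ : ι → κ, G (σ i) (σ j) =
      ∑ p : κ × ({k // k ≠ i} → κ), G p.1 (p.2 ⟨j, hij⟩) :=
    Fintype.sum_equiv (Equiv.funSplitAt i κ) _ _ (fun σ => by simp [Equiv.funSplitAt])
  have hcard : Fintype.card ι = Fintype.card {k // k ≠ i} + 1 := by
    have hpos : 0 < Fintype.card ι := Fintype.card_pos_iff.mpr ⟨i⟩
    have := Set.card_ne_eq i
    simp only [Set.coe_ofPred] at this
    omega
  -- Fix the value at `i` and average over the remaining coordinates.
  rw [hsplit, Fintype.sum_prod_type, hcard, sq, pow_succ, mul_assoc, Finset.mul_sum]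
  simp only [card_mul_sum_eval (⟨j, hij⟩ : {k // k ≠ i})]
  rw [← Finset.mul_sum]
  ring

lemma thetaAD_eq_sum_fin (d : ℕ) (K : (Fin d → ℝ) → ℝ) (h : ℝ) (n : ℕ) (X : ℕ → Fin d → ℝ) :
    thetaAD d K h n X = ((n : ℝ) ^ 2)⁻¹ * ∑ i : Fin n, ∑ j : Fin n, Kn d K h (X i - X j) := by
  unfold thetaAD fhat
  simp only [Finset.sum_range]
  rw [← Finset.mul_sum, ← mul_assoc, sq, mul_inv]

lemma bootE_thetaAD (d : ℕ) (K : (Fin d → ℝ) → ℝ) (h : ℝ) {n : ℕ} (hn : 1 ≤ n)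
    (X : ℕ → Fin d → ℝ) :
    bootE n (fun Y => thetaAD d K h n Y) X =
      K 0 / ((n : ℝ) * h ^ d) + (1 - 1 / (n : ℝ)) * thetaAD d K h n X := by
  have hn0 : (n : ℝ) ≠ 0 := by positivity
  set θ := thetaAD d K h n X with hθ
  have hS : ∑ a : Fin n, ∑ b : Fin n, Kn d K h (X a - X b) = (n : ℝ) ^ 2 * θ := by
    rw [hθ, thetaAD_eq_sum_fin]
    field_simp
  have hterm (i j : Fin n) : ∑ σ : Fin n → Fin n, Kn d K h (X (σ i) - X (σ j)) =
      (n : ℝ) ^ n * (θ + if i = j then Kn d K h 0 - θ else 0) := by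
    split_ifs with hij
    · subst hij
      simp
    · have hpair := card_sq_mul_sum_eval_pair (Ne.symm hij)
        (fun a b : Fin n => Kn d K h (X a - X b))
      rw [hS, Fintype.card_fin] at hpair
      have hsq : (n : ℝ) ^ 2 ≠ 0 := pow_ne_zero _ hn0
      apply mul_left_cancel₀ hsq
      rw [hpair]
      ring
  have hres (σ : Fin n → Fin n) (i : Fin n) : resample n σ X i = X (σ i) := by
    simp [resample]
  have hsum : ∑ σ : Fin n → Fin n, ∑ i : Fin n, ∑ j : Fin n, Kn d K h (X (σ i) - X (σ j)) =
      (n : ℝ) ^ n * ((n : ℝ) ^ 2 * θ + n * (Kn d K h 0 - θ)) := by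
    rw [Finset.sum_comm]
    have hswap (i : Fin n) :
        ∑ σ : Fin n → Fin n, ∑ j : Fin n, Kn d K h (X (σ i) - X (σ j)) =
          (n : ℝ) ^ n * (n * θ + (Kn d K h 0 - θ)) := by
      rw [Finset.sum_comm]
      simp only [hterm]
      rw [← Finset.mul_sum, Finset.sum_add_distrib]
      simp
    simp only [hswap]
    simp only [Finset.sum_const, Finset.card_univ, Fintype.card_fin, nsmul_eq_mul]
    ring
  have hK0 : Kn d K h 0 = (h ^ d)⁻¹ * K 0 := by simp [Kn]
  unfold bootE
  simp only [thetaAD_eq_sum_fin, hres]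
  rw [← Finset.mul_sum, hsum, hK0, div_eq_mul_inv, mul_inv]
  field_simp
  ring

theorem average_density_plugin_exact_bootstrap_bias
    {Ω : Type} [MeasureSpace Ω] [IsProbabilityMeasure (ℙ : Measure Ω)]
    {d n : ℕ} (hd : 1 ≤ d) (hn : 1 ≤ n)
    (X : ℕ → Ω → Fin d → ℝ) (hXmeas : ∀ i, Measurable (X i))
    (K : (Fin d → ℝ) → ℝ) (hKeven : ∀ x, K (-x) = K x)
    (hKbdd : ∃ C : ℝ, ∀ x, |K x| ≤ C) (hKint : Integrable K)
    (h : ℝ) (hh : 0 < h) :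
    ∀ᵐ ω ∂ℙ,
      bootE n (fun Y => thetaAD d K h n Y) (fun i => X i ω) -
          thetaAD d K h n (fun i => X i ω) =
        K 0 / ((n : ℝ) * h ^ d) - thetaAD d K h n (fun i => X i ω) / (n : ℝ) ∧
      bootE n (fun Y => thetaAD d K h n Y) (fun i => X i ω) =
        K 0 / ((n : ℝ) * h ^ d) +
          (1 - 1 / (n : ℝ)) * thetaAD d K h n (fun i => X i ω) := by
  refine Filter.Eventually.of_forall fun ω => ?_
  have hboot := bootE_thetaAD d K h hn (fun i => X i ω)
  refine ⟨?_, hboot⟩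
  rw [hboot]
  ring

end
end

section
/- Exact bootstrap centering of the leave-out average density estimator: if the weights satisfy w_{ii,n} = 0 and Σ_{j≤n} w_{ij,n} = 1 for every i (as holds for the block leave-out weights), then, almost surely, E*_n[θ̂_n^{AD-LO,*}] = θ̂_n^{AD}; consequently the bootstrap bias of the leave-out estimator equals E*_n[θ̂_n^{AD-LO,*}] − θ̂_n^{AD-LO} = θ̂_n^{AD} − θ̂_n^{AD-LO} almost surely. -/
/-!
The identity holds for every data path. At two distinct positions `i ≠ j` the resampled pair is
uniform over all `n²` pairs of data points (`card_mul_sum_pair`, `bootE_pair`), so each off-diagonal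
term `K_n(X*_i - X*_j)` has bootstrap expectation `θ̂ₙ^AD`, diagonal contributions `K_n(0)` included.
The leave-out estimator has no diagonal terms since `w i i = 0`, and averages the others with
weights that sum to one in each row; linearity gives the claim (`bootE_weighted_pairs`). The bias
formula follows by subtracting the estimator itself.
-/

open MeasureTheory ProbabilityTheory Filter
open scoped BigOperators ENNReal NNReal Topology ProbabilityTheory

noncomputable section

/-- For distinct positions `a ≠ b` of a uniformly random map `σ : ι → κ`, the pair `(σ a, σ b)` is
uniform on `κ × κ`; stated without division. The involution
`(σ, u, v) ↦ (σ[a ↦ u, b ↦ v], σ a, σ b)` exchanges the summand `F (σ a) (σ b)` with `F u v`. -/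
theorem card_mul_sum_pair {ι κ : Type*} [Fintype ι] [DecidableEq ι] [Fintype κ]
    {a b : ι} (hab : a ≠ b) (F : κ → κ → ℝ) :
    (Fintype.card κ : ℝ) ^ 2 * ∑ σ : ι → κ, F (σ a) (σ b) =
      (Fintype.card κ : ℝ) ^ Fintype.card ι * ∑ u, ∑ v, F u v := by
  let e : (ι → κ) × κ × κ → (ι → κ) × κ × κ := fun p =>
    (Function.update (Function.update p.1 a p.2.1) b p.2.2, p.1 a, p.1 b)
  have he : Function.Involutive e := by
    rintro ⟨σ, u, v⟩
    refine Prod.ext ?_ (by simp [e, hab])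
    ext i
    by_cases hb : i = b
    · subst hb; simp [e]
    · by_cases ha : i = a
      · subst ha; simp [e, hb]
      · simp [e, ha, hb]
  have key : ∑ p : (ι → κ) × κ × κ, F (p.1 a) (p.1 b) =
      ∑ p : (ι → κ) × κ × κ, F p.2.1 p.2.2 :=
    Fintype.sum_equiv he.toPerm _ _ fun p => rfl
  simp only [Fintype.sum_prod_type, Finset.sum_const, Finset.card_univ, nsmul_eq_mul,
    Fintype.card_fun, Fintype.card_prod, ← Finset.mul_sum] at key
  push_cast at key
  rw [← key]
  ring

/-- A resampled pair at distinct positions has the average of all `n²` data pairs, diagonal pairs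
included, as its bootstrap expectation. -/
theorem bootE_pair {V : Type*} {n a b : ℕ} (ha : a < n) (hb : b < n) (hab : a ≠ b)
    (G : V → V → ℝ) (x : ℕ → V) :
    bootE n (fun Y => G (Y a) (Y b)) x =
      ((n : ℝ) ^ 2)⁻¹ * ∑ u ∈ Finset.range n, ∑ v ∈ Finset.range n, G (x u) (x v) := by
  have hn : (n : ℝ) ≠ 0 := by exact_mod_cast (Nat.zero_lt_of_lt ha).ne'
  have key := card_mul_sum_pair (a := (⟨a, ha⟩ : Fin n)) (b := ⟨b, hb⟩)
    (fun hf => hab (congrArg Fin.val hf)) (fun u v : Fin n => G (x u) (x v))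
  simp only [Fintype.card_fin] at key
  simp only [bootE, resample, ha, hb, dif_pos, Finset.sum_range]
  field_simp
  linarith

/-- Exact centering for one data path and any pair function `G`: the vanishing diagonal weights
remove the terms `G (Y i) (Y i)`, and the remaining weights have total mass `n`. -/
theorem bootE_weighted_pairs {V : Type*} {n : ℕ} (w : ℕ → ℕ → ℝ) (hwdiag : ∀ i, w i i = 0)
    (hwsum : ∀ i < n, (∑ j ∈ Finset.range n, w i j) = 1) (G : V → V → ℝ) (x : ℕ → V) :
    bootE n (fun Y => (n : ℝ)⁻¹ * ∑ i ∈ Finset.range n, ∑ j ∈ Finset.range n,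
        w i j * G (Y i) (Y j)) x =
      (n : ℝ)⁻¹ * ∑ u ∈ Finset.range n, (n : ℝ)⁻¹ * ∑ v ∈ Finset.range n, G (x u) (x v) := by
  have hlin : bootE n (fun Y => (n : ℝ)⁻¹ * ∑ i ∈ Finset.range n, ∑ j ∈ Finset.range n,
        w i j * G (Y i) (Y j)) x =
      (n : ℝ)⁻¹ * ∑ i ∈ Finset.range n, ∑ j ∈ Finset.range n,
        w i j * bootE n (fun Y => G (Y i) (Y j)) x := by
    simp only [bootE]
    rw [← Finset.mul_sum, Finset.sum_comm, mul_left_comm]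
    congr 1
    rw [Finset.mul_sum]
    refine Finset.sum_congr rfl fun i _ => ?_
    rw [Finset.sum_comm, Finset.mul_sum]
    refine Finset.sum_congr rfl fun j _ => ?_
    rw [← Finset.mul_sum, mul_left_comm]
  rw [hlin]
  set S := ∑ u ∈ Finset.range n, ∑ v ∈ Finset.range n, G (x u) (x v) with hS
  have hterm : ∀ i ∈ Finset.range n, ∑ j ∈ Finset.range n,
      w i j * bootE n (fun Y => G (Y i) (Y j)) x = ((n : ℝ) ^ 2)⁻¹ * S := by
    intro i hi
    calc _ = ∑ j ∈ Finset.range n, w i j * (((n : ℝ) ^ 2)⁻¹ * S) := by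
          refine Finset.sum_congr rfl fun j hj => ?_
          by_cases hij : i = j
          · subst hij; simp [hwdiag]
          · rw [bootE_pair (Finset.mem_range.1 hi) (Finset.mem_range.1 hj) hij]
      _ = _ := by rw [← Finset.sum_mul, hwsum i (Finset.mem_range.1 hi), one_mul]
  rw [Finset.sum_congr rfl hterm, ← Finset.mul_sum, ← Finset.mul_sum, ← hS]
  rcases Nat.eq_zero_or_pos n with h0 | h0
  · simp [h0]
  · have hn : (n : ℝ) ≠ 0 := by exact_mod_cast h0.ne'
    simp only [Finset.sum_const, Finset.card_range, nsmul_eq_mul]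
    field_simp

theorem leave_out_exact_bootstrap_centering
    {Ω : Type} [MeasureSpace Ω] [IsProbabilityMeasure (ℙ : Measure Ω)]
    {d n : ℕ} (hd : 1 ≤ d) (hn : 2 ≤ n)
    (X : ℕ → Ω → Fin d → ℝ) (hXmeas : ∀ i, Measurable (X i))
    (K : (Fin d → ℝ) → ℝ) (hKeven : ∀ x, K (-x) = K x)
    (hKbdd : ∃ C : ℝ, ∀ x, |K x| ≤ C) (hKint : Integrable K)
    (h : ℝ) (hh : 0 < h)
    (w : ℕ → ℕ → ℝ) (hwnonneg : ∀ i j, 0 ≤ w i j) (hwdiag : ∀ i, w i i = 0)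
    (hwsum : ∀ i < n, (∑ j ∈ Finset.range n, w i j) = 1) :
    ∀ᵐ ω ∂ℙ,
      bootE n
          (fun Y => (n : ℝ)⁻¹ * ∑ i ∈ Finset.range n, ∑ j ∈ Finset.range n,
            w i j * Kn d K h (Y i - Y j))
          (fun i => X i ω) =
        thetaAD d K h n (fun i => X i ω) ∧
      bootE n
          (fun Y => (n : ℝ)⁻¹ * ∑ i ∈ Finset.range n, ∑ j ∈ Finset.range n,
            w i j * Kn d K h (Y i - Y j))
          (fun i => X i ω) -
          ((n : ℝ)⁻¹ * ∑ i ∈ Finset.range n, ∑ j ∈ Finset.range n,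
            w i j * Kn d K h (X i ω - X j ω)) =
        thetaAD d K h n (fun i => X i ω) -
          (n : ℝ)⁻¹ * ∑ i ∈ Finset.range n, ∑ j ∈ Finset.range n,
            w i j * Kn d K h (X i ω - X j ω) := by
  refine Eventually.of_forall fun ω => ?_
  have hcenter := bootE_weighted_pairs w hwdiag hwsum (fun p q => Kn d K h (p - q))
    (fun i => X i ω)
  exact ⟨hcenter, congrArg (· - _) hcenter⟩

end
end
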